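/- There exists a map ϱ from the disjoint union of the groups UVB_n (n ≥ 2) to itself (together with the trivial group UVB_1) satisfying: (1) for every braid α, α and ϱ(α) are fused Markov equivalent; (2) if α ∈ UVP_n then ϱ(α) = α; (3) if α ∈ UVB_n \ UVP_n, then ϱ(α) ∈ UVB_{n−1} (interpreting UVB_1 as the trivial group when n = 2). -/

import Mathlib

/-!  Common setup: the unrestricted virtual braid group `UVB n`, its generators
σ_k, ρ_k (1-based indices), the elements λ_{i,j} and B_{i,j}, the permutation
homomorphism ι (characterized by `IsIota`), the section s : S_n → UVB n
(characterized by `IsPermSection`), and fused Markov equivalence. -/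

/-- Generators of the unrestricted virtual braid group `UVB n`:
`Sum.inl i` is the classical generator σ_{i+1} and `Sum.inr i` is the virtual
generator ρ_{i+1}, for `i : Fin (n-1)` (so the 1-based indices are `1, …, n-1`). -/
abbrev UVBGen (n : ℕ) := Sum (Fin (n - 1)) (Fin (n - 1))

namespace UVBGen
def sg {n : ℕ} (i : Fin (n - 1)) : FreeGroup (UVBGen n) := FreeGroup.of (Sum.inl i)
def rg {n : ℕ} (i : Fin (n - 1)) : FreeGroup (UVBGen n) := FreeGroup.of (Sum.inr i)
end UVBGen

open UVBGen in
/-- The defining relations of the unrestricted virtual braid group. -/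
def uvbRels (n : ℕ) : Set (FreeGroup (UVBGen n)) :=
  {r | (∃ i j : Fin (n - 1), (j : ℕ) = (i : ℕ) + 1 ∧
          (r = sg i * sg j * sg i * (sg j * sg i * sg j)⁻¹ ∨
           r = rg i * rg j * rg i * (rg j * rg i * rg j)⁻¹ ∨
           r = rg i * rg j * sg i * (sg j * rg i * rg j)⁻¹ ∨
           r = rg i * sg j * sg i * (sg j * sg i * rg j)⁻¹ ∨
           r = rg j * sg i * sg j * (sg i * sg j * rg i)⁻¹)) ∨
       (∃ i j : Fin (n - 1), ((i : ℕ) + 2 ≤ (j : ℕ) ∨ (j : ℕ) + 2 ≤ (i : ℕ)) ∧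
          (r = sg i * sg j * (sg j * sg i)⁻¹ ∨
           r = rg i * rg j * (rg j * rg i)⁻¹ ∨
           r = sg i * rg j * (rg j * sg i)⁻¹)) ∨
       (∃ i : Fin (n - 1), r = rg i * rg i)}

/-- The unrestricted virtual braid group on `n` strands. -/
abbrev UVB (n : ℕ) := PresentedGroup (uvbRels n)

namespace UVB

/-- The generator σ_k (1-based index; meaningful for `1 ≤ k ≤ n-1`, junk value `1` otherwise). -/
def sigma (n k : ℕ) : UVB n :=
  if h : 1 ≤ k ∧ k ≤ n - 1 then PresentedGroup.of (Sum.inl ⟨k - 1, by omega⟩) else 1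

/-- The generator ρ_k (1-based index; meaningful for `1 ≤ k ≤ n-1`, junk value `1` otherwise). -/
def rho (n k : ℕ) : UVB n :=
  if h : 1 ≤ k ∧ k ≤ n - 1 then PresentedGroup.of (Sum.inr ⟨k - 1, by omega⟩) else 1

/-- The element λ_{i,j} of `UVB n` (1-based indices `1 ≤ i ≠ j ≤ n`; junk value `1` if `i = j`).
For `i < j`:  `λ_{i,j} = ρ_{j-1}⋯ρ_{i+1} · ρ_i σ_i⁻¹ · ρ_{i+1}⋯ρ_{j-1}` and
`λ_{j,i} = ρ_{j-1}⋯ρ_{i+1} · σ_i⁻¹ ρ_i · ρ_{i+1}⋯ρ_{j-1}`. -/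
def lam (n i j : ℕ) : UVB n :=
  if i < j then
    (((List.range' (i + 1) (j - 1 - i)).reverse.map (rho n)).prod) *
      (rho n i * (sigma n i)⁻¹) *
      (((List.range' (i + 1) (j - 1 - i)).map (rho n)).prod)
  else if j < i then
    (((List.range' (j + 1) (i - 1 - j)).reverse.map (rho n)).prod) *
      ((sigma n j)⁻¹ * rho n j) *
      (((List.range' (j + 1) (i - 1 - j)).map (rho n)).prod)
  else 1

/-- The element `B_{i,j} = ρ_{j-1}ρ_{j-2}⋯ρ_{i+1}ρ_i` for `i < j`, and `1` otherwise. -/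
def B (n i j : ℕ) : UVB n :=
  if i < j then ((List.range' i (j - i)).reverse.map (rho n)).prod else 1

/-- The subgroup `U_j` of `UVB n` generated by `{λ_{i,j}, λ_{j,i} : 1 ≤ i < j}`. -/
def U (n j : ℕ) : Subgroup (UVB n) :=
  Subgroup.closure {x | ∃ i, 1 ≤ i ∧ i < j ∧ (x = lam n i j ∨ x = lam n j i)}

end UVB

/-- `ι : UVB n →* S_n` is the homomorphism sending σ_k and ρ_k to the
transposition (k, k+1) (written 0-based on `Fin n`). -/
def IsIota (n : ℕ) (ι : UVB n →* Equiv.Perm (Fin n)) : Prop :=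
  ∀ (k : ℕ) (h1 : 1 ≤ k) (h2 : k ≤ n - 1),
    ι (UVB.sigma n k) = Equiv.swap ⟨k - 1, by omega⟩ ⟨k, by omega⟩ ∧
    ι (UVB.rho n k) = Equiv.swap ⟨k - 1, by omega⟩ ⟨k, by omega⟩

/-- `s : S_n →* UVB n` is the homomorphism sending the transposition (k, k+1) to ρ_k. -/
def IsPermSection (n : ℕ) (s : Equiv.Perm (Fin n) →* UVB n) : Prop :=
  ∀ (k : ℕ) (h1 : 1 ≤ k) (h2 : k ≤ n - 1),
    s (Equiv.swap ⟨k - 1, by omega⟩ ⟨k, by omega⟩) = UVB.rho n k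

/-- The number of orbits of a permutation of `Fin n`
(= number of fixed points + number of nontrivial cycles). -/
def numOrbits {n : ℕ} (π : Equiv.Perm (Fin n)) : ℕ :=
  (Finset.univ.filter fun x => π x = x).card + π.cycleType.card

namespace UVB

private def embedGen (n : ℕ) : UVBGen n → UVBGen (n + 1)
  | Sum.inl i => Sum.inl ⟨i.val, by have := i.isLt; omega⟩
  | Sum.inr i => Sum.inr ⟨i.val, by have := i.isLt; omega⟩

open UVBGen in
/-- The natural inclusion `UVB n →* UVB (n+1)` (σ_k ↦ σ_k, ρ_k ↦ ρ_k). -/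
def incl (n : ℕ) : UVB n →* UVB (n + 1) :=
  PresentedGroup.toGroup (f := fun x => PresentedGroup.of (embedGen n x)) (by
    have key : (FreeGroup.lift fun x => (PresentedGroup.of (embedGen n x) : UVB (n + 1)))
        = (PresentedGroup.mk (uvbRels (n + 1))).comp (FreeGroup.map (embedGen n)) := by
      ext x
      simp [PresentedGroup.of]
    intro r hr
    rw [key]
    simp only [MonoidHom.comp_apply]
    have hmem : FreeGroup.map (embedGen n) r ∈ uvbRels (n + 1) := by
      have hsg : ∀ i : Fin (n - 1), FreeGroup.map (embedGen n) (sg i)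
          = sg (⟨i.val, by have := i.isLt; omega⟩ : Fin (n + 1 - 1)) := by
        intro i; simp [sg, embedGen]
      have hrg : ∀ i : Fin (n - 1), FreeGroup.map (embedGen n) (rg i)
          = rg (⟨i.val, by have := i.isLt; omega⟩ : Fin (n + 1 - 1)) := by
        intro i; simp [rg, embedGen]
      rcases hr with ⟨i, j, hij, hc⟩ | ⟨i, j, hij, hc⟩ | ⟨i, hc⟩
      · refine Or.inl ⟨⟨i.val, by have := i.isLt; omega⟩, ⟨j.val, by have := j.isLt; omega⟩,
          by simpa using hij, ?_⟩
        rcases hc with h | h | h | h | h <;> subst h <;>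
          simp only [map_mul, map_inv, hsg, hrg] <;> tauto
      · refine Or.inr (Or.inl ⟨⟨i.val, by have := i.isLt; omega⟩, ⟨j.val, by have := j.isLt; omega⟩,
          by simpa using hij, ?_⟩)
        rcases hc with h | h | h <;> subst h <;>
          simp only [map_mul, map_inv, hsg, hrg] <;> tauto
      · refine Or.inr (Or.inr ⟨⟨i.val, by have := i.isLt; omega⟩, ?_⟩)
        subst hc
        simp only [map_mul, hsg, hrg]
    exact (QuotientGroup.eq_one_iff _).mpr (Subgroup.subset_normalClosure hmem))

end UVB

/-- The elementary fused Markov moves on the disjoint union of the groups `UVB n`: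
conjugation, and the three right stabilizations (positive, negative, virtual). -/
inductive MarkovBase : (Σ n, UVB n) → (Σ n, UVB n) → Prop
  | conj (n : ℕ) (α γ : UVB n) : MarkovBase ⟨n, α⟩ ⟨n, γ * α * γ⁻¹⟩
  | stabPos (n : ℕ) (α : UVB n) :
      MarkovBase ⟨n, α⟩ ⟨n + 1, UVB.incl n α * UVB.sigma (n + 1) n⟩
  | stabNeg (n : ℕ) (α : UVB n) :
      MarkovBase ⟨n, α⟩ ⟨n + 1, UVB.incl n α * (UVB.sigma (n + 1) n)⁻¹⟩
  | stabVirt (n : ℕ) (α : UVB n) :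
      MarkovBase ⟨n, α⟩ ⟨n + 1, UVB.incl n α * UVB.rho (n + 1) n⟩

/-- Fused Markov equivalence: the smallest equivalence relation generated by the
elementary Markov moves.  By Kamada's theorem, two unrestricted virtual braids are
fused Markov equivalent iff their closures are equivalent fused links. -/
def Markov : (Σ n, UVB n) → (Σ n, UVB n) → Prop := Relation.EqvGen MarkovBase

namespace UVBProof
variable {G : Type*} [Group G]

/-- relations among two adjacent pairs of generators -/
structure Adj (a b s t : G) : Prop where
  ha : a * a = 1
  hb : b * b = 1
  h2 : a * b * a = b * a * b
  h3 : a * b * s = t * a * b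
  h4 : a * t * s = t * s * b
  h5 : b * s * t = s * t * a
  h1 : s * t * s = t * s * t

theorem re {x y z : G} (h : x * y = z) (w : G) : x * (y * w) = z * w := by
  rw [← mul_assoc, h]

theorem conjC {a x y : G} (ha : a * a = 1) (h : x * y = y * x) :
    (a * x * a) * (a * y * a) = (a * y * a) * (a * x * a) := by
  have h' := re ha
  simp only [mul_assoc, h', one_mul]
  rw [← mul_assoc x, h, mul_assoc]

namespace Adj
variable {a b s t : G} (A : Adj a b s t)
include A

theorem t_eq : t = a * b * s * b * a := by
  rw [A.h3]
  have h1 := re A.ha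
  have h2 := re A.hb
  simp only [mul_assoc, h2, A.ha, one_mul, mul_one]

theorem bsb : b * s * b = a * t * a := by
  rw [A.t_eq]
  have h1 := re A.ha
  simp only [mul_assoc, h1, A.ha, one_mul, mul_one]

theorem c1 : (s * a) * (b * (s * a) * b) = (b * (s * a) * b) * (s * a) := by
  have h := A.h5
  have ha := A.ha
  have hb := A.hb
  have hb' := re hb
  have ha' := re ha
  rw [A.t_eq] at h
  have e : b * s * a * b * s = s * a * b * s * (b * a * b) := by
    calc b * s * a * b * s = (b * s * (a * b * s * b * a)) * (a * b) := by
          simp only [mul_assoc, ha', hb, one_mul, mul_one]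
      _ = _ := by
          rw [h]; simp only [mul_assoc, ha', one_mul]
  rw [← A.h2] at e
  calc (s * a) * (b * (s * a) * b) = (s * a * b * s * (a * b * a)) * a := by
        simp only [mul_assoc, ha, mul_one]
    _ = _ := by rw [← e]; simp only [mul_assoc]

theorem c2 : (a * s) * (b * (a * s) * b) = (b * (a * s) * b) * (a * s) := by
  have h := A.h4
  have ha := A.ha
  have hb := A.hb
  have hb' := re hb
  have ha' := re ha
  rw [A.t_eq] at h
  have e : s * b * a * s * b = (b * a * b) * s * b * a * s := by
    calc s * b * a * s * b = (b * a) * (a * b * s * b * a * s * b) := by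
          simp only [mul_assoc, ha', hb', one_mul]
      _ = _ := by
          rw [← h]; simp only [mul_assoc, ha', one_mul]
  rw [← A.h2] at e
  calc (a * s) * (b * (a * s) * b) = a * (s * b * a * s * b) := by
        simp only [mul_assoc]
    _ = _ := by rw [e]; simp only [mul_assoc, ha', one_mul]

theorem absab : a * (b * (s * a) * b) * a = t * b := by
  have h := A.h2
  have hb := A.hb
  calc a * (b * (s * a) * b) * a = a * b * s * (a * b * a) := by simp only [mul_assoc]
    _ = (a * b * s * b * a) * b := by rw [h]; simp only [mul_assoc]
    _ = _ := by rw [← A.t_eq]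

theorem abasb : a * (b * (a * s) * b) * a = b * t := by
  have h := A.h2
  calc a * (b * (a * s) * b) * a = (a * b * a) * s * b * a := by simp only [mul_assoc]
    _ = b * (a * b * s * b * a) := by rw [h]; simp only [mul_assoc]
    _ = _ := by rw [← A.t_eq]

theorem asa : a * (s * a) * a = a * s := by simp only [mul_assoc, A.ha, mul_one]
theorem aas : a * (a * s) * a = s * a := by simp only [← mul_assoc, A.ha, one_mul]
theorem btb : b * (t * b) * b = b * t := by simp only [mul_assoc, A.hb, mul_one]
theorem bbt : b * (b * t) * b = t * b := by simp only [← mul_assoc, A.hb, one_mul]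

/-- `b(sa)b = a(tb)a` -/
theorem conj_q : b * (s * a) * b = a * (t * b) * a := by
  rw [← A.absab]
  simp only [mul_assoc, re A.ha, A.ha, one_mul, mul_one]
theorem conj_p : b * (a * s) * b = a * (b * t) * a := by
  rw [← A.abasb]
  simp only [mul_assoc, re A.ha, A.ha, one_mul, mul_one]

theorem pQ : (a * s) * (t * b) = (t * b) * (a * s) := by
  have := conjC A.ha A.c1
  rwa [A.asa, A.absab] at this
theorem qP : (s * a) * (b * t) = (b * t) * (s * a) := by
  have := conjC A.ha A.c2
  rwa [A.aas, A.abasb] at this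

theorem qQ : (s * a) * (t * b) = (t * b) * (s * a) := by
  have ha := A.ha
  have hb := A.hb
  have hb' := re hb
  have ha' := re ha
  have hRQ := conjC A.hb A.qP
  rw [A.bbt] at hRQ
  have hqR := A.c1
  have hbr : (s * a) * (b * (s * a) * b) * (t * b) = (t * b) * (b * (s * a) * b) * (s * a) := by
    have h := A.h1
    have e1 : (s * a) * (b * (s * a) * b) * (t * b) = s * t * s * (a * b * a) := by
      rw [A.conj_q]
      have : t * b = a * (b * (s * a) * b) * a := A.absab.symm
      calc (s * a) * (a * (t * b) * a) * (t * b)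
          = (s * a) * (a * (t * b) * a) * (a * (b * (s * a) * b) * a) := by rw [A.absab]
        _ = _ := by simp only [mul_assoc, ha', hb', one_mul]
    have e2 : (t * b) * (b * (s * a) * b) * (s * a) = t * s * t * (b * a * b) := by
      have h3 : s * a = b * (a * (t * b) * a) * b := by
        rw [← A.conj_q]; simp only [mul_assoc, hb', hb, one_mul, mul_one]
      calc (t * b) * (b * (s * a) * b) * (s * a)
          = (t * b) * (b * (s * a) * b) * (b * (a * (t * b) * a) * b) := by rw [← h3]
        _ = _ := by simp only [mul_assoc, ha', hb', one_mul]
    rw [e1, e2, h, A.h2]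
  have hfin : (b * (s * a) * b) * ((s * a) * (t * b)) = (b * (s * a) * b) * ((t * b) * (s * a)) := by
    rw [← mul_assoc _ (s * a) (t * b), ← mul_assoc _ (t * b) (s * a), ← hqR, hbr, hRQ]
  exact mul_left_cancel hfin

theorem pP : (a * s) * (b * t) = (b * t) * (a * s) := by
  have h := conjC A.ha (conjC A.hb (conjC A.ha A.qQ))
  rw [A.asa, A.abasb, ← A.conj_q] at h
  have : b * (b * (s * a) * b) * b = s * a := by
    simp only [mul_assoc, re A.hb, A.hb, one_mul, mul_one]
  rw [this, A.asa] at h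
  exact h.symm
end Adj

def X (a s : G) : Subgroup G := Subgroup.closure {a * s, s * a}

theorem X_conj {a s x : G} (ha : a * a = 1) (hx : x ∈ X a s) : a * x * a ∈ X a s := by
  have hi : a⁻¹ = a := inv_eq_of_mul_eq_one_left ha
  have : X a s ≤ (X a s).comap (MulAut.conj a).toMonoidHom := by
    refine (Subgroup.closure_le _).2 ?_
    rintro y (rfl | rfl)
    · refine Subgroup.subset_closure ?_
      simp [hi, ← mul_assoc, ha]
    · refine Subgroup.subset_closure ?_
      simp [hi, mul_assoc, ha]
  have := this hx
  simpa [hi] using this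

namespace Adj
variable {a b s t : G} (A : Adj a b s t)
include A

/-- `X a s` and `X b t` commute -/
theorem L1 {x y : G} (hx : x ∈ X a s) (hy : y ∈ X b t) : x * y = y * x := by
  have : X a s ≤ Subgroup.centralizer (X b t : Set G) := by
    rw [X, X, Subgroup.centralizer_closure, Subgroup.closure_le]
    rintro z (rfl | rfl) <;> rw [SetLike.mem_coe, Subgroup.mem_centralizer_iff] <;>
      rintro w (rfl | rfl)
    · exact A.pP.symm
    · exact A.pQ.symm
    · exact A.qP.symm
    · exact A.qQ.symm
  exact ((Subgroup.mem_centralizer_iff.1 (this hx)) y hy).symm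

theorem L2 {x : G} (hx : x ∈ X a s) : ∃ y ∈ X b t, b * x * b = a * y * a := by
  have hai : a⁻¹ = a := inv_eq_of_mul_eq_one_left A.ha
  have hbi : b⁻¹ = b := inv_eq_of_mul_eq_one_left A.hb
  have : X a s ≤ ((X b t).map (MulAut.conj a).toMonoidHom).comap (MulAut.conj b).toMonoidHom := by
    refine (Subgroup.closure_le _).2 ?_
    rintro y (rfl | rfl)
    · refine ⟨b * t, Subgroup.subset_closure (by simp), ?_⟩
      simpa [hai, hbi] using A.conj_p.symm
    · refine ⟨t * b, Subgroup.subset_closure (by simp), ?_⟩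
      simpa [hai, hbi] using A.conj_q.symm
  obtain ⟨y, hy, e⟩ := this hx
  exact ⟨y, hy, by simpa [hai, hbi] using e.symm⟩

theorem L2' {y : G} (hy : y ∈ X b t) : ∃ x ∈ X a s, a * y * a = b * x * b := by
  have hai : a⁻¹ = a := inv_eq_of_mul_eq_one_left A.ha
  have hbi : b⁻¹ = b := inv_eq_of_mul_eq_one_left A.hb
  have : X b t ≤ ((X a s).map (MulAut.conj b).toMonoidHom).comap (MulAut.conj a).toMonoidHom := by
    refine (Subgroup.closure_le _).2 ?_
    rintro y (rfl | rfl)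
    · refine ⟨a * s, Subgroup.subset_closure (by simp), ?_⟩
      simpa [hai, hbi] using A.conj_p
    · refine ⟨s * a, Subgroup.subset_closure (by simp), ?_⟩
      simpa [hai, hbi] using A.conj_q
  obtain ⟨x, hx, e⟩ := this hy
  exact ⟨x, hx, by simpa [hai, hbi] using e.symm⟩

theorem L4 {x x' : G} (hx : x ∈ X a s) (hx' : x' ∈ X a s) :
    (b * x * b) * x' = x' * (b * x * b) := by
  obtain ⟨y, hy, e⟩ := A.L2 hx
  have := conjC A.ha (A.L1 (X_conj A.ha hx') hy)
  have e2 : a * (a * x' * a) * a = x' := by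
    simp only [mul_assoc, re A.ha, A.ha, one_mul, mul_one]
  rw [e2, ← e] at this
  exact this.symm

theorem L5 {y y' : G} (hy : y ∈ X b t) (hy' : y' ∈ X b t) :
    (a * y * a) * y' = y' * (a * y * a) := by
  obtain ⟨x, hx, e⟩ := A.L2' hy
  have := conjC A.hb (A.L1 hx (X_conj A.hb hy'))
  have e2 : b * (b * y' * b) * b = y' := by
    simp only [mul_assoc, re A.hb, A.hb, one_mul, mul_one]
  rwa [e2, ← e] at this
end Adj

/-- a system of generators satisfying the unrestricted virtual braid relations;
`M` is the number of generators of each kind, 0-based. -/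
structure Sys (M : ℕ) (s r : ℕ → G) : Prop where
  rr : ∀ i, r i * r i = 1
  adj : ∀ i, i + 1 < M → Adj (r i) (r (i + 1)) (s i) (s (i + 1))
  fss : ∀ i j, i + 2 ≤ j → s i * s j = s j * s i
  frr : ∀ i j, i + 2 ≤ j → r i * r j = r j * r i
  fsr : ∀ i j, i + 2 ≤ j → s i * r j = r j * s i
  frs : ∀ i j, i + 2 ≤ j → r i * s j = s j * r i

def H (s r : ℕ → G) (k : ℕ) : Subgroup G :=
  Subgroup.closure {g | ∃ i, i < k ∧ (g = s i ∨ g = r i)}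

def C (s r : ℕ → G) : ℕ → Set G
  | 0 => {1}
  | k + 1 => {g | ∃ x ∈ X (r k) (s k), ∃ c ∈ C s r k, ∃ h ∈ H s r k,
      g = x * (r k * c * r k) * h}

def Bs (s r : ℕ → G) (k : ℕ) : Set G :=
  {g | ∃ j, k = j + 1 ∧ ∃ h ∈ H s r j, ∃ w ∈ X (r j) (s j), ∃ h' ∈ H s r j,
    g = h * (w * r j) * h'}

theorem sH {s r : ℕ → G} {i k : ℕ} (h : i < k) : s i ∈ H s r k :=
  Subgroup.subset_closure ⟨i, h, Or.inl rfl⟩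
theorem rH {s r : ℕ → G} {i k : ℕ} (h : i < k) : r i ∈ H s r k :=
  Subgroup.subset_closure ⟨i, h, Or.inr rfl⟩
theorem H_mono {s r : ℕ → G} {i k : ℕ} (h : i ≤ k) : H s r i ≤ H s r k := by
  refine Subgroup.closure_mono ?_
  rintro g ⟨j, hj, e⟩
  exact ⟨j, by omega, e⟩
theorem XH {s r : ℕ → G} {i k : ℕ} (h : i < k) : X (r i) (s i) ≤ H s r k := by
  refine (Subgroup.closure_le _).2 ?_
  rintro g (rfl | rfl)
  · exact mul_mem (rH h) (sH h)
  · exact mul_mem (sH h) (rH h)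
theorem H_zero {s r : ℕ → G} {g : G} (h : g ∈ H s r 0) : g = 1 := by
  have : H s r 0 = ⊥ := by
    rw [H, Subgroup.closure_eq_bot_iff]
    rintro g ⟨j, hj, e⟩
    omega
  rw [this] at h
  exact h

theorem C_sub {s r : ℕ → G} : ∀ {k : ℕ} {c : G}, c ∈ C s r k → c ∈ H s r k
  | 0, c, h => by
      have : c = 1 := h
      rw [this]; exact one_mem _
  | k + 1, c, h => by
      obtain ⟨x, hx, c', hc, h, hh, rfl⟩ := h
      have hr : r k ∈ H s r (k + 1) := rH (by omega)
      exact mul_mem (mul_mem (XH (by omega) hx)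
        (mul_mem (mul_mem hr (H_mono (by omega) (C_sub hc))) hr)) (H_mono (by omega) hh)

theorem C_one {s r : ℕ → G} (rr : ∀ i, r i * r i = 1) : ∀ k, (1 : G) ∈ C s r k
  | 0 => rfl
  | k + 1 => ⟨1, one_mem _, 1, C_one rr k, 1, one_mem _, by simp [rr]⟩

/-- Left-multiplicative induction over `H (k+1)`. -/
theorem H_ind {s r : ℕ → G} (rr : ∀ i, r i * r i = 1) {k : ℕ} (T : G → Prop)
    (hH : ∀ g ∈ H s r k, ∀ y, T y → T (g * y))
    (hr : ∀ y, T y → T (r k * y))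
    (hX : ∀ g ∈ X (r k) (s k), ∀ y, T y → T (g * y)) :
    ∀ g ∈ H s r (k + 1), ∀ y, T y → T (g * y) := by
  have hi : (r k)⁻¹ = r k := inv_eq_of_mul_eq_one_left (rr k)
  have hp : r k * s k ∈ X (r k) (s k) := Subgroup.subset_closure (by simp)
  intro g hg
  induction hg using Subgroup.closure_induction_left with
  | one => intro y hy; simpa using hy
  | mul_left x hx z hz ih =>
    intro y hy
    rw [mul_assoc]
    have h1 := ih y hy
    obtain ⟨i, hi', e⟩ := hx
    rcases Nat.lt_succ_iff_lt_or_eq.1 hi' with h | rfl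
    · refine hH _ ?_ _ h1
      rcases e with rfl | rfl
      · exact sH h
      · exact rH h
    · rcases e with rfl | rfl
      · have := hr _ (hX _ hp _ h1)
        rwa [mul_assoc, re (rr i), one_mul] at this
      · exact hr _ h1
  | inv_mul_cancel x hx z hz ih =>
    intro y hy
    rw [mul_assoc]
    have h1 := ih y hy
    obtain ⟨i, hi', e⟩ := hx
    rcases Nat.lt_succ_iff_lt_or_eq.1 hi' with h | rfl
    · refine hH _ ?_ _ h1
      rcases e with rfl | rfl
      · exact inv_mem (sH h)
      · exact inv_mem (rH h)
    · rcases e with rfl | rfl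
      · have := hX _ (inv_mem hp) _ (hr _ h1)
        rwa [← mul_assoc, mul_inv_rev, inv_mul_cancel_right] at this
      · rw [hi]; exact hr _ h1

namespace Sys
variable {M : ℕ} {s r : ℕ → G} (S : Sys M s r)
include S

theorem Hr {g : G} {k j : ℕ} (hg : g ∈ H s r k) (h : k < j) : g * r j = r j * g := by
  have : H s r k ≤ Subgroup.centralizer {r j} := by
    refine (Subgroup.closure_le _).2 ?_
    rintro g ⟨i, hi, rfl | rfl⟩ <;> rw [SetLike.mem_coe, Subgroup.mem_centralizer_singleton_iff]
    · exact S.fsr i j (by omega)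
    · exact S.frr i j (by omega)
  exact (Subgroup.mem_centralizer_singleton_iff.1 (this hg))

theorem Hs {g : G} {k j : ℕ} (hg : g ∈ H s r k) (h : k < j) : g * s j = s j * g := by
  have : H s r k ≤ Subgroup.centralizer {s j} := by
    refine (Subgroup.closure_le _).2 ?_
    rintro g ⟨i, hi, rfl | rfl⟩ <;> rw [SetLike.mem_coe, Subgroup.mem_centralizer_singleton_iff]
    · exact S.fss i j (by omega)
    · exact S.frs i j (by omega)
  exact (Subgroup.mem_centralizer_singleton_iff.1 (this hg))

theorem HX {g x : G} {k j : ℕ} (hg : g ∈ H s r k) (h : k < j) (hx : x ∈ X (r j) (s j)) :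
    g * x = x * g := by
  have hr : Commute g (r j) := S.Hr hg h
  have hs : Commute g (s j) := S.Hs hg h
  have : X (r j) (s j) ≤ Subgroup.centralizer {g} := by
    refine (Subgroup.closure_le _).2 ?_
    rintro y (rfl | rfl) <;> rw [SetLike.mem_coe, Subgroup.mem_centralizer_singleton_iff]
    · exact (hr.mul_right hs).symm
    · exact (hs.mul_right hr).symm
  exact (Subgroup.mem_centralizer_singleton_iff.1 (this hx)).symm

theorem CX : ∀ {k : ℕ} {c x : G}, k < M → c ∈ C s r k → x ∈ X (r k) (s k) → c * x = x * c
  | 0, c, x, _, hc, hx => by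
      have : c = 1 := hc
      simp [this]
  | k + 1, c, x, hk, hc, hx => by
      obtain ⟨y, hy, c', hc', h, hh, rfl⟩ := hc
      have A := S.adj k hk
      have h1 : Commute y x := A.L1 hy hx
      have h2 : Commute h x := S.HX hh (by omega) hx
      have h3 : Commute (r k * c' * r k) x := by
        obtain ⟨x', hx', e⟩ := A.L2' hx
        have i1 : Commute c' x' := CX (by omega) hc' hx'
        have i2 : Commute c' (r (k + 1)) := S.Hr (C_sub hc') (by omega)
        have i3 : Commute c' (r k * x * r k) := by
          rw [e]; exact (i2.mul_right i1).mul_right i2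
        have := conjC A.ha i3
        have e2 : r k * (r k * x * r k) * r k = x := by
          simp only [mul_assoc, re A.ha, A.ha, one_mul, mul_one]
        rwa [e2] at this
      exact (h1.mul_left h3).mul_left h2

theorem HC : ∀ {k : ℕ}, k < M → ∀ g ∈ H s r k, ∀ c, c ∈ C s r (k + 1) → g * c ∈ C s r (k + 1)
  | 0, _, g, hg, c, hc => by
      rw [H_zero hg, one_mul]; exact hc
  | k + 1, hk, g, hg, c, hc => by
      have A := S.adj k hk
      have ha' := re A.ha
      have hb' := re A.hb
      revert c
      refine H_ind S.rr (k := k) (fun c => c ∈ C s r (k + 1 + 1)) ?_ ?_ ?_ g hg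
      · rintro g hg _ ⟨x, hx, c, hc, h, hh, rfl⟩
        refine ⟨x, hx, g * c, HC (by omega) g hg c hc, h, hh, ?_⟩
        have e1 := S.HX hg (Nat.lt_succ_self k) hx
        have e2 := S.Hr hg (Nat.lt_succ_self k)
        calc g * (x * (r (k + 1) * c * r (k + 1)) * h)
            = (g * x) * r (k + 1) * c * r (k + 1) * h := by simp only [mul_assoc]
          _ = x * (g * r (k + 1)) * c * r (k + 1) * h := by rw [e1]; simp only [mul_assoc]
          _ = _ := by rw [e2]; simp only [mul_assoc]
      · rintro _ ⟨x, hx, _, ⟨x2, hx2, c, hc, h', hh', rfl⟩, h, hh, rfl⟩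
        obtain ⟨x1, hx1, e1⟩ := A.L2' hx
        -- x2 ↦ a b x2 b a
        obtain ⟨y, hy, e2⟩ := A.L2 hx2
        have e3 := A.L5 hx hy
        have e5 := S.Hr hh' (Nat.lt_succ_self k)
        have e6 := S.Hr (C_sub hc) (Nat.lt_succ_self k)
        refine ⟨y, hy, x1 * (r k * c * r k) * 1, ⟨x1, hx1, c, hc, 1, one_mem _, rfl⟩,
          r k * (h' * h), mul_mem (rH (by omega)) (mul_mem (H_mono (by omega) hh') hh), ?_⟩
        generalize r k = a at *
        generalize r (k + 1) = b at *
        calc a * (x * (b * (x2 * (a * c * a) * h') * b) * h)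
            = a * x * b * x2 * a * c * a * (h' * b) * h := by simp only [mul_assoc]
          _ = (a * x * a) * a * (b * x2 * b) * b * a * c * a * b * h' * h := by
              rw [e5]; simp only [mul_assoc, ha', hb', one_mul]
          _ = ((a * x * a) * y) * (a * b * a) * c * a * b * h' * h := by
              rw [e2]; simp only [mul_assoc, ha', one_mul]
          _ = y * (b * x1 * b) * (b * a * b) * c * a * b * h' * h := by
              rw [e3, A.h2, e1]
          _ = y * b * x1 * a * (b * c) * a * b * h' * h := by
              simp only [mul_assoc, hb', one_mul]
          _ = y * b * x1 * a * c * (b * a * b) * h' * h := by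
              rw [← e6]; simp only [mul_assoc]
          _ = _ := by rw [← A.h2]; simp only [mul_assoc, one_mul]
      · rintro x1 hx1 _ ⟨x, hx, _, ⟨x2, hx2, c, hc, h', hh', rfl⟩, h, hh, rfl⟩
        have e1 := A.L1 hx1 hx
        have e2 := A.L4 hx1 hx2
        have e5 := S.Hr hh' (Nat.lt_succ_self k)
        have e6 := S.Hr (C_sub hc) (Nat.lt_succ_self k)
        have e7 : (r (k + 1) * x1 * r (k + 1)) * (r k * c * r k)
            = (r k * c * r k) * (r (k + 1) * x1 * r (k + 1)) := by
          obtain ⟨y, hy, e⟩ := A.L2 hx1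
          rw [e]
          exact conjC A.ha (S.HX (C_sub hc) (Nat.lt_succ_self k) hy).symm
        refine ⟨x, hx, x2 * (r k * c * r k) * 1, ⟨x2, hx2, c, hc, 1, one_mem _, rfl⟩,
          x1 * (h' * h), mul_mem (XH (by omega) hx1) (mul_mem (H_mono (by omega) hh') hh), ?_⟩
        generalize r k = a at *
        generalize r (k + 1) = b at *
        calc x1 * (x * (b * (x2 * (a * c * a) * h') * b) * h)
            = (x1 * x) * b * x2 * (a * c * a) * (h' * b) * h := by simp only [mul_assoc]
          _ = x * b * ((b * x1 * b) * x2) * (a * c * a) * b * h' * h := by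
              rw [e1, e5]; simp only [mul_assoc, hb', one_mul]
          _ = x * b * x2 * ((b * x1 * b) * (a * c * a)) * b * h' * h := by
              rw [e2]; simp only [mul_assoc]
          _ = x * b * x2 * (a * c * a) * (b * x1 * b) * b * h' * h := by
              rw [e7]; simp only [mul_assoc]
          _ = _ := by simp only [mul_assoc, hb', one_mul]

theorem D : ∀ {k : ℕ}, k ≤ M → ∀ g ∈ H s r k, g ∈ C s r k ∨ g ∈ Bs s r k
  | 0, _, g, hg => Or.inl (H_zero hg)
  | k + 1, hk, g, hg => by
      have hrr := S.rr k
      have hb' := re hrr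
      have key := H_ind S.rr (k := k) (fun c => c ∈ C s r (k + 1) ∨ c ∈ Bs s r (k + 1)) ?_ ?_ ?_ g hg
        1 (Or.inl (C_one S.rr _))
      · simpa using key
      · rintro g hg y (hy | ⟨j, hj, h, hh, w, hw, h', hh', rfl⟩)
        · exact Or.inl (S.HC (by omega) g hg y hy)
        · obtain rfl : k = j := by omega
          exact Or.inr ⟨k, rfl, g * h, mul_mem hg hh, w, hw, h', hh', by simp only [mul_assoc]⟩
      · rintro _ (⟨x, hx, c, hc, h, hh, rfl⟩ | ⟨j, hj, h, hh, w, hw, h', hh', rfl⟩)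
        · have hx' := X_conj hrr hx
          refine Or.inr ⟨k, rfl, c, C_sub hc, r k * x * r k, hx', h, hh, ?_⟩
          rw [← mul_assoc c, S.CX (by omega) hc hx']
          simp only [mul_assoc]
        · obtain rfl : k = j := by omega
          rcases D (by omega) h hh with hC | ⟨j, rfl, k1, hk1, w1, hw1, k2, hk2, rfl⟩
          · refine Or.inl ⟨_, X_conj hrr hw, h, hC, h', hh', ?_⟩
            calc r k * (h * (w * r k) * h') = r k * (h * w) * r k * h' := by simp only [mul_assoc]
              _ = _ := by
                rw [S.CX (by omega) hC hw]; simp only [mul_assoc, hb', one_mul]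
          · have A := S.adj j (by omega)
            have ha' := re A.ha
            obtain ⟨w2, hw2, e1⟩ := A.L2' hw
            obtain ⟨y, hy, e2⟩ := A.L2 hw1
            have e3 := A.L4 hw2 hw1
            have e4 := S.Hr hk1 (Nat.lt_succ_self j)
            have e5 := S.Hr hk2 (Nat.lt_succ_self j)
            have e6 := S.HX hk2 (Nat.lt_succ_self j) hw
            refine Or.inr ⟨j + 1, rfl, k1 * w2 * r j, ?_, y, hy, r j * (k2 * h'), ?_, ?_⟩
            · exact mul_mem (mul_mem (H_mono (by omega) hk1) (XH (by omega) hw2)) (rH (by omega))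
            · exact mul_mem (rH (by omega)) (mul_mem (H_mono (by omega) hk2) hh')
            · have e7 : r (j + 1) * w1 * r j * w * r (j + 1) = w2 * r j * y * r (j + 1) * r j := by
                generalize r j = a at *
                generalize r (j + 1) = b at *
                calc b * w1 * a * w * b = b * (w1 * (a * w * a)) * a * b := by
                      simp only [mul_assoc, ha', one_mul]
                  _ = w2 * (b * w1 * b) * (b * a * b) := by
                      rw [e1, ← e3]; simp only [mul_assoc, hb', one_mul]
                  _ = _ := by
                      rw [e2, ← A.h2]; simp only [mul_assoc, ha', one_mul]
              calc r (j + 1) * (k1 * (w1 * r j) * k2 * (w * r (j + 1)) * h')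
                  = (r (j + 1) * k1) * w1 * r j * (k2 * w) * r (j + 1) * h' := by
                    simp only [mul_assoc]
                _ = k1 * r (j + 1) * w1 * r j * w * (k2 * r (j + 1)) * h' := by
                    rw [← e4, e6]; simp only [mul_assoc]
                _ = k1 * (r (j + 1) * w1 * r j * w * r (j + 1)) * k2 * h' := by
                    rw [e5]; simp only [mul_assoc]
                _ = _ := by rw [e7]; simp only [mul_assoc]
      · rintro x hx _ (⟨x', hx', c, hc, h, hh, rfl⟩ | ⟨j, hj, h, hh, w, hw, h', hh', rfl⟩)
        · exact Or.inl ⟨x * x', mul_mem hx hx', c, hc, h, hh, by simp only [mul_assoc]⟩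
        · obtain rfl : k = j := by omega
          rcases D (by omega) h hh with hC | ⟨j, rfl, k1, hk1, w1, hw1, k2, hk2, rfl⟩
          · refine Or.inr ⟨k, rfl, h, hh, x * w, mul_mem hx hw, h', hh', ?_⟩
            have := S.CX (by omega) hC hx
            rw [← mul_assoc, ← mul_assoc, ← this]; simp only [mul_assoc]
          · have A := S.adj j (by omega)
            have ha' := re A.ha
            obtain ⟨x2, hx2, e1⟩ := A.L2' hx
            have e3 := A.L5 hx hw
            have e4 := S.HX hk1 (Nat.lt_succ_self j) hx
            have e5 := S.Hr hk2 (Nat.lt_succ_self j)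
            have e6 := S.HX hk2 (Nat.lt_succ_self j) hw
            have e8 := A.L1 hw1 hx
            refine Or.inr ⟨j + 1, rfl, k1 * w1 * r j, ?_, w, hw, x2 * (k2 * h'), ?_, ?_⟩
            · exact mul_mem (mul_mem (H_mono (by omega) hk1) (XH (by omega) hw1)) (rH (by omega))
            · exact mul_mem (XH (by omega) hx2) (mul_mem (H_mono (by omega) hk2) hh')
            · have e7 : x * r j * w * r (j + 1) = r j * w * r (j + 1) * x2 := by
                generalize r j = a at *
                generalize r (j + 1) = b at *
                calc x * a * w * b = a * ((a * x * a) * w) * b := by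
                      simp only [mul_assoc, ha', one_mul]
                  _ = a * w * (b * x2 * b) * b := by rw [e3, e1]; simp only [mul_assoc]
                  _ = _ := by simp only [mul_assoc, hrr, mul_one]
              calc x * (k1 * (w1 * r j) * k2 * (w * r (j + 1)) * h')
                  = (x * k1) * w1 * r j * (k2 * w) * r (j + 1) * h' := by
                    simp only [mul_assoc]
                _ = k1 * (x * w1) * r j * w * (k2 * r (j + 1)) * h' := by
                    rw [← e4, e6]; simp only [mul_assoc]
                _ = k1 * w1 * (x * r j * w * r (j + 1)) * k2 * h' := by
                    rw [← e8, e5]; simp only [mul_assoc]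
                _ = _ := by rw [e7]; simp only [mul_assoc]
end Sys

/-! Application to `UVB`. -/

def sv (N i : ℕ) : UVB N := UVB.sigma N (i + 1)
def rv (N i : ℕ) : UVB N := UVB.rho N (i + 1)

theorem sv_of {N i : ℕ} (h : i < N - 1) : sv N i = PresentedGroup.of (Sum.inl ⟨i, h⟩) := by
  unfold sv UVB.sigma
  rw [dif_pos (by omega)]
  simp
theorem rv_of {N i : ℕ} (h : i < N - 1) : rv N i = PresentedGroup.of (Sum.inr ⟨i, h⟩) := by
  unfold rv UVB.rho
  rw [dif_pos (by omega)]
  simp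
theorem sv_one {N i : ℕ} (h : ¬ i < N - 1) : sv N i = 1 := by
  unfold sv UVB.sigma
  rw [dif_neg (by omega)]
theorem rv_one {N i : ℕ} (h : ¬ i < N - 1) : rv N i = 1 := by
  unfold rv UVB.rho
  rw [dif_neg (by omega)]

theorem rel_eq {N : ℕ} {x y : FreeGroup (UVBGen N)} (h : x * y⁻¹ ∈ uvbRels N) :
    PresentedGroup.mk (uvbRels N) x = PresentedGroup.mk (uvbRels N) y := by
  have : PresentedGroup.mk (uvbRels N) (x * y⁻¹) = 1 :=
    (QuotientGroup.eq_one_iff _).mpr (Subgroup.subset_normalClosure h)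
  rw [map_mul, map_inv] at this
  exact mul_inv_eq_one.1 this

theorem sys (N : ℕ) : Sys (N - 1) (sv N) (rv N) := by
  have hrr : ∀ i, rv N i * rv N i = 1 := by
    intro i
    by_cases h : i < N - 1
    · rw [rv_of h]
      have : PresentedGroup.mk (uvbRels N) (UVBGen.rg ⟨i, h⟩ * UVBGen.rg ⟨i, h⟩) = 1 :=
        (QuotientGroup.eq_one_iff _).mpr
          (Subgroup.subset_normalClosure (Or.inr (Or.inr ⟨⟨i, h⟩, rfl⟩)))
      exact this
    · rw [rv_one h, one_mul]
  refine ⟨hrr, ?_, ?_, ?_, ?_, ?_⟩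
  · intro i hi
    have hi' : i < N - 1 := by omega
    refine ⟨hrr i, hrr (i + 1), ?_, ?_, ?_, ?_, ?_⟩ <;>
      simp only [rv_of hi', rv_of hi, sv_of hi', sv_of hi]
    · exact rel_eq (N := N) (x := UVBGen.rg ⟨i, hi'⟩ * UVBGen.rg ⟨i + 1, hi⟩ * UVBGen.rg ⟨i, hi'⟩)
        (y := UVBGen.rg ⟨i + 1, hi⟩ * UVBGen.rg ⟨i, hi'⟩ * UVBGen.rg ⟨i + 1, hi⟩)
        (Or.inl ⟨⟨i, hi'⟩, ⟨i + 1, hi⟩, rfl, by tauto⟩)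
    · exact rel_eq (N := N) (x := UVBGen.rg ⟨i, hi'⟩ * UVBGen.rg ⟨i + 1, hi⟩ * UVBGen.sg ⟨i, hi'⟩)
        (y := UVBGen.sg ⟨i + 1, hi⟩ * UVBGen.rg ⟨i, hi'⟩ * UVBGen.rg ⟨i + 1, hi⟩)
        (Or.inl ⟨⟨i, hi'⟩, ⟨i + 1, hi⟩, rfl, by tauto⟩)
    · exact rel_eq (N := N) (x := UVBGen.rg ⟨i, hi'⟩ * UVBGen.sg ⟨i + 1, hi⟩ * UVBGen.sg ⟨i, hi'⟩)
        (y := UVBGen.sg ⟨i + 1, hi⟩ * UVBGen.sg ⟨i, hi'⟩ * UVBGen.rg ⟨i + 1, hi⟩)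
        (Or.inl ⟨⟨i, hi'⟩, ⟨i + 1, hi⟩, rfl, by tauto⟩)
    · exact rel_eq (N := N) (x := UVBGen.rg ⟨i + 1, hi⟩ * UVBGen.sg ⟨i, hi'⟩ * UVBGen.sg ⟨i + 1, hi⟩)
        (y := UVBGen.sg ⟨i, hi'⟩ * UVBGen.sg ⟨i + 1, hi⟩ * UVBGen.rg ⟨i, hi'⟩)
        (Or.inl ⟨⟨i, hi'⟩, ⟨i + 1, hi⟩, rfl, by tauto⟩)
    · exact rel_eq (N := N) (x := UVBGen.sg ⟨i, hi'⟩ * UVBGen.sg ⟨i + 1, hi⟩ * UVBGen.sg ⟨i, hi'⟩)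
        (y := UVBGen.sg ⟨i + 1, hi⟩ * UVBGen.sg ⟨i, hi'⟩ * UVBGen.sg ⟨i + 1, hi⟩)
        (Or.inl ⟨⟨i, hi'⟩, ⟨i + 1, hi⟩, rfl, by tauto⟩)
  · intro i j hij
    by_cases hj : j < N - 1
    · have hi : i < N - 1 := by omega
      rw [sv_of hi, sv_of hj]
      exact rel_eq (N := N) (x := UVBGen.sg ⟨i, hi⟩ * UVBGen.sg ⟨j, hj⟩)
        (y := UVBGen.sg ⟨j, hj⟩ * UVBGen.sg ⟨i, hi⟩)
        (Or.inr (Or.inl ⟨⟨i, hi⟩, ⟨j, hj⟩, Or.inl hij, by tauto⟩))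
    · rw [sv_one hj, one_mul, mul_one]
  · intro i j hij
    by_cases hj : j < N - 1
    · have hi : i < N - 1 := by omega
      rw [rv_of hi, rv_of hj]
      exact rel_eq (N := N) (x := UVBGen.rg ⟨i, hi⟩ * UVBGen.rg ⟨j, hj⟩)
        (y := UVBGen.rg ⟨j, hj⟩ * UVBGen.rg ⟨i, hi⟩)
        (Or.inr (Or.inl ⟨⟨i, hi⟩, ⟨j, hj⟩, Or.inl hij, by tauto⟩))
    · rw [rv_one hj, one_mul, mul_one]
  · intro i j hij
    by_cases hj : j < N - 1
    · have hi : i < N - 1 := by omega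
      rw [sv_of hi, rv_of hj]
      exact rel_eq (N := N) (x := UVBGen.sg ⟨i, hi⟩ * UVBGen.rg ⟨j, hj⟩)
        (y := UVBGen.rg ⟨j, hj⟩ * UVBGen.sg ⟨i, hi⟩)
        (Or.inr (Or.inl ⟨⟨i, hi⟩, ⟨j, hj⟩, Or.inl hij, by tauto⟩))
    · rw [rv_one hj, one_mul, mul_one]
  · intro i j hij
    by_cases hj : j < N - 1
    · have hi : i < N - 1 := by omega
      rw [rv_of hi, sv_of hj]
      exact (rel_eq (N := N) (x := UVBGen.sg ⟨j, hj⟩ * UVBGen.rg ⟨i, hi⟩)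
        (y := UVBGen.rg ⟨i, hi⟩ * UVBGen.sg ⟨j, hj⟩)
        (Or.inr (Or.inl ⟨⟨j, hj⟩, ⟨i, hi⟩, Or.inr hij, by tauto⟩))).symm
    · rw [sv_one hj, one_mul, mul_one]

theorem H_top (N : ℕ) (g : UVB N) : g ∈ H (sv N) (rv N) (N - 1) := by
  have h : Subgroup.closure (Set.range (PresentedGroup.of (rels := uvbRels N))) = ⊤ :=
    PresentedGroup.closure_range_of _
  have : (⊤ : Subgroup (UVB N)) ≤ H (sv N) (rv N) (N - 1) := by
    rw [← h, Subgroup.closure_le]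
    rintro _ ⟨i | i, rfl⟩
    · have := sH (s := sv N) (r := rv N) i.2
      rwa [sv_of i.2] at this
    · have := rH (s := sv N) (r := rv N) i.2
      rwa [rv_of i.2] at this
  exact this (Subgroup.mem_top g)

theorem incl_sv {N i : ℕ} (h : i < N - 1) : UVB.incl N (sv N i) = sv (N + 1) i := by
  rw [sv_of h, sv_of (by omega)]
  exact PresentedGroup.toGroup.of _
theorem incl_rv {N i : ℕ} (h : i < N - 1) : UVB.incl N (rv N i) = rv (N + 1) i := by
  rw [rv_of h, rv_of (by omega)]
  exact PresentedGroup.toGroup.of _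

theorem incl_H {N k : ℕ} (hk : k ≤ N - 1) {g : UVB N} (hg : g ∈ H (sv N) (rv N) k) :
    UVB.incl N g ∈ H (sv (N + 1)) (rv (N + 1)) k := by
  have : H (sv N) (rv N) k ≤ (H (sv (N + 1)) (rv (N + 1)) k).comap (UVB.incl N) := by
    refine (Subgroup.closure_le _).2 ?_
    rintro _ ⟨i, hi, rfl | rfl⟩
    · rw [SetLike.mem_coe, Subgroup.mem_comap]
      rw [incl_sv (by omega)]; exact sH hi
    · rw [SetLike.mem_coe, Subgroup.mem_comap]
      rw [incl_rv (by omega)]; exact rH hi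
  exact this hg

theorem incl_X {N k : ℕ} (hk : k < N - 1) {g : UVB N} (hg : g ∈ X (rv N k) (sv N k)) :
    UVB.incl N g ∈ X (rv (N + 1) k) (sv (N + 1) k) := by
  have : X (rv N k) (sv N k) ≤ (X (rv (N + 1) k) (sv (N + 1) k)).comap (UVB.incl N) := by
    refine (Subgroup.closure_le _).2 ?_
    rintro _ (rfl | rfl)
    · rw [SetLike.mem_coe, Subgroup.mem_comap]
      rw [map_mul, incl_sv hk, incl_rv hk]; exact Subgroup.subset_closure (by simp)
    · rw [SetLike.mem_coe, Subgroup.mem_comap]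
      rw [map_mul, incl_sv hk, incl_rv hk]; exact Subgroup.subset_closure (by simp)
  exact this hg

theorem H_range {N : ℕ} {g : UVB (N + 1)} (hg : g ∈ H (sv (N + 1)) (rv (N + 1)) (N - 1)) :
    ∃ β : UVB N, UVB.incl N β = g := by
  have : H (sv (N + 1)) (rv (N + 1)) (N - 1) ≤ (UVB.incl N).range := by
    refine (Subgroup.closure_le _).2 ?_
    rintro _ ⟨i, hi, rfl | rfl⟩
    · exact ⟨_, incl_sv hi⟩
    · exact ⟨_, incl_rv hi⟩
  exact this hg

/-! Markov equivalence -/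

theorem Mk.symm {x y : Σ n, UVB n} (h : Markov x y) : Markov y x := Relation.EqvGen.symm _ _ h
theorem Mk.trans {x y z : Σ n, UVB n} (h : Markov x y) (h' : Markov y z) : Markov x z :=
  Relation.EqvGen.trans _ _ _ h h'

theorem Mk.cyc {n : ℕ} (x y : UVB n) : Markov ⟨n, x * y⟩ ⟨n, y * x⟩ := by
  have := Relation.EqvGen.rel _ _ (MarkovBase.conj n (x * y) y)
  rwa [mul_assoc, mul_assoc x, mul_inv_cancel, mul_one] at this

theorem Mk.stabV {n : ℕ} (x : UVB (n + 1)) :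
    Markov ⟨n + 1, x⟩ ⟨n + 2, UVB.incl (n + 1) x * rv (n + 2) n⟩ :=
  Relation.EqvGen.rel _ _ (MarkovBase.stabVirt (n + 1) x)
theorem Mk.stabP {n : ℕ} (x : UVB (n + 1)) :
    Markov ⟨n + 1, x⟩ ⟨n + 2, UVB.incl (n + 1) x * sv (n + 2) n⟩ :=
  Relation.EqvGen.rel _ _ (MarkovBase.stabPos (n + 1) x)

/-- `β p w a ∼ β w a` -/
theorem moveL {m : ℕ} {β w : UVB (m + 2)} (hβ : β ∈ H (sv (m + 2)) (rv (m + 2)) m)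
    (hw : w ∈ X (rv (m + 2) m) (sv (m + 2) m)) :
    Markov ⟨m + 2, β * w * rv (m + 2) m⟩
      ⟨m + 2, β * ((sv (m + 2) m * rv (m + 2) m) * w) * rv (m + 2) m⟩ := by
  have S := sys (m + 3)
  have A := S.adj m (by omega)
  have hβ' := incl_H (by omega) hβ
  have hw' := incl_X (by omega) hw
  have hp : sv (m + 3) m * rv (m + 3) m ∈ X (rv (m + 3) m) (sv (m + 3) m) :=
    Subgroup.subset_closure (by simp)
  have e1 := S.Hr hβ' (Nat.lt_succ_self m)
  have e2 := A.L4 hp hw'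
  have e3 := A.bsb
  have es := incl_sv (N := m + 2) (i := m) (by omega)
  have er := incl_rv (N := m + 2) (i := m) (by omega)
  refine Mk.trans (Mk.stabP (β * w * rv (m + 2) m)) ?_
  have key : UVB.incl (m + 2) (β * w * rv (m + 2) m) * sv (m + 3) (m + 1)
      = rv (m + 3) (m + 1) * (UVB.incl (m + 2) (β * (sv (m + 2) m * rv (m + 2) m)) *
        rv (m + 3) (m + 1) * UVB.incl (m + 2) (w * rv (m + 2) m)* rv (m + 3) (m + 1)) := by
    simp only [map_mul]
    erw [es, er]
    generalize UVB.incl (m + 2) β = β' at *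
    generalize UVB.incl (m + 2) w = w' at *
    have ha' := re A.ha
    have hb' := re A.hb
    have h2 := A.h2
    have ha := A.ha
    generalize rv (m + 3) m = a at *
    change β' * w' * a * sv (m + 3) (m + 1) = _
    generalize rv (m + 3) (m + 1) = b at *
    generalize sv (m + 3) m = s at *
    generalize sv (m + 3) (m + 1) = t at *
    calc β' * w' * a * t = β' * w' * (a * t * a) * a := by simp only [mul_assoc, ha, mul_one]
      _ = β' * w' * b * s * a * (a * b * a) := by
          rw [← e3]; simp only [mul_assoc, ha', one_mul]
      _ = β' * (w' * (b * (s * a) * b)) * a * b := by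
          rw [h2]; simp only [mul_assoc]
      _ = (β' * b) * s * a * b * w' * a * b := by rw [← e2]; simp only [mul_assoc]
      _ = _ := by rw [e1]; simp only [mul_assoc]
  rw [key]
  refine Mk.trans (Mk.cyc _ _) ?_
  rw [mul_assoc _ (rv (m + 3) (m + 1)) (rv (m + 3) (m + 1)), A.hb, mul_one]
  refine Mk.trans (Mk.cyc _ _) ?_
  rw [← mul_assoc, ← map_mul]
  refine Mk.trans (Mk.symm (Mk.stabV _)) ?_
  refine Mk.trans (Mk.cyc _ _) ?_
  simp only [mul_assoc]
  exact Relation.EqvGen.refl _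

theorem moveR {m : ℕ} {β w : UVB (m + 2)} (hβ : β ∈ H (sv (m + 2)) (rv (m + 2)) m)
    (hw : w ∈ X (rv (m + 2) m) (sv (m + 2) m)) :
    Markov ⟨m + 2, β * rv (m + 2) m * w⟩
      ⟨m + 2, β * rv (m + 2) m * (w * (rv (m + 2) m * sv (m + 2) m))⟩ := by
  have S := sys (m + 3)
  have A := S.adj m (by omega)
  have hβ' := incl_H (by omega) hβ
  have hw' := incl_X (by omega) hw
  have hp : rv (m + 3) m * sv (m + 3) m ∈ X (rv (m + 3) m) (sv (m + 3) m) :=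
    Subgroup.subset_closure (by simp)
  have e1 := S.Hr hβ' (Nat.lt_succ_self m)
  have e0 := S.Hs hβ' (Nat.lt_succ_self m)
  have e2 := A.L4 hp hw'
  have e3 := A.bsb
  have es := incl_sv (N := m + 2) (i := m) (by omega)
  have er := incl_rv (N := m + 2) (i := m) (by omega)
  refine Mk.trans (Mk.stabP (β * rv (m + 2) m * w)) (Mk.trans (Mk.cyc _ _) ?_)
  have key : sv (m + 3) (m + 1) * UVB.incl (m + 2) (β * rv (m + 2) m * w)
      = rv (m + 3) (m + 1) * (UVB.incl (m + 2) (β * rv (m + 2) m * w) *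
        rv (m + 3) (m + 1) * UVB.incl (m + 2) (rv (m + 2) m * sv (m + 2) m) *
          rv (m + 3) (m + 1)) := by
    simp only [map_mul]
    erw [es, er]
    generalize UVB.incl (m + 2) β = β' at *
    generalize UVB.incl (m + 2) w = w' at *
    have ha' := re A.ha
    have hb' := re A.hb
    have h2 := A.h2
    have ha := A.ha
    generalize rv (m + 3) m = a at *
    generalize rv (m + 3) (m + 1) = b at *
    generalize sv (m + 3) m = s at *
    generalize sv (m + 3) (m + 1) = t at *
    calc t * (β' * a * w') = (t * β') * a * w' := by simp only [mul_assoc]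
      _ = β' * a * (a * t * a) * w' := by
          rw [← e0]; simp only [mul_assoc, ha', one_mul]
      _ = β' * (a * b * a) * (a * s) * b * w' := by
          rw [← e3]; simp only [mul_assoc, ha', one_mul]
      _ = (β' * b) * a * ((b * (a * s) * b) * w') := by
          rw [h2]; simp only [mul_assoc]
      _ = _ := by rw [e2, e1]; simp only [mul_assoc]
  rw [key]
  refine Mk.trans (Mk.cyc _ _) ?_
  rw [mul_assoc _ (rv (m + 3) (m + 1)) (rv (m + 3) (m + 1)), A.hb, mul_one]
  refine Mk.trans (Mk.cyc _ _) ?_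
  rw [← mul_assoc, ← map_mul]
  refine Mk.trans (Mk.symm (Mk.stabV _)) ?_
  refine Mk.trans (Mk.cyc _ _) ?_
  simp only [mul_assoc]
  exact Relation.EqvGen.refl _

/-- reduction for `β w a`. -/
theorem red {m : ℕ} {β w : UVB (m + 2)} (hβ : β ∈ H (sv (m + 2)) (rv (m + 2)) m)
    (hw : w ∈ X (rv (m + 2) m) (sv (m + 2) m)) :
    ∃ γ : UVB (m + 1), Markov ⟨m + 2, β * w * rv (m + 2) m⟩ ⟨m + 1, γ⟩ := by
  have S := sys (m + 2)
  have hrr := S.rr m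
  rcases S.D (by omega) β hβ with hC | ⟨j, rfl, k1, hk1, w1, hw1, k2, hk2, rfl⟩
  · -- `β` commutes with `X`
    have hcomm : ∀ x ∈ X (rv (m + 2) m) (sv (m + 2) m), β * x = x * β :=
      fun x hx => S.CX (by omega) hC hx
    set a := rv (m + 2) m with ha
    set s := sv (m + 2) m with hs
    have hq : s * a ∈ X a s := Subgroup.subset_closure (by simp)
    have hp : a * s ∈ X a s := Subgroup.subset_closure (by simp)
    have m1 : ∀ w ∈ X a s, Markov ⟨m + 2, β * w * a⟩ ⟨m + 2, β * ((s * a) * w) * a⟩ :=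
      fun w hw => moveL hβ hw
    have m2 : ∀ w ∈ X a s, Markov ⟨m + 2, β * w * a⟩ ⟨m + 2, β * (w * (s * a)) * a⟩ := by
      intro w hw
      have := moveR hβ (X_conj hrr hw)
      simp only [← ha, ← hs] at this
      have e1 : β * a * (a * w * a) = β * w * a := by
        simp only [mul_assoc, re hrr, one_mul]
      have e2 : β * a * (a * w * a * (a * s)) = β * (w * (s * a)) * a := by
        simp only [mul_assoc, re hrr, hrr, one_mul, mul_one]
      rwa [e1, e2] at this
    have m3 : ∀ w ∈ X a s, Markov ⟨m + 2, β * w * a⟩ ⟨m + 2, β * ((a * s) * w) * a⟩ := by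
      intro w hw
      have h1 := m2 ((a * s) * w * (s * a)⁻¹) (mul_mem (mul_mem hp hw) (inv_mem hq))
      rw [inv_mul_cancel_right] at h1
      refine Mk.trans ?_ h1
      have h2 := Mk.cyc ((a * s)⁻¹) ((a * s) * (β * w * a))
      rw [inv_mul_cancel_left] at h2
      have hai : a⁻¹ = a := inv_eq_of_mul_eq_one_left hrr
      have e : a * s * (β * w * a) * (a * s)⁻¹ = β * (a * s * w * (s * a)⁻¹) * a := by
        calc a * s * (β * w * a) * (a * s)⁻¹ = (a * s * β) * w * a * (a * s)⁻¹ := by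
              simp only [mul_assoc]
          _ = _ := by
              rw [← hcomm _ hp]
              simp only [mul_assoc, mul_inv_rev, hai, re hrr, hrr, one_mul, mul_one]
      rwa [e] at h2
    have fin : Markov ⟨m + 2, β * 1 * a⟩ ⟨m + 2, β * w * a⟩ := by
      induction hw using Subgroup.closure_induction_left with
      | one => exact Relation.EqvGen.refl _
      | mul_left x hx z hz ih =>
        refine Mk.trans ih ?_
        rcases hx with rfl | rfl
        · exact m3 z hz
        · exact m1 z hz
      | inv_mul_cancel x hx z hz ih =>
        refine Mk.trans ih (Mk.symm ?_)
        rcases hx with rfl | rfl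
        · have := m3 _ (mul_mem (inv_mem hp) hz)
          rwa [mul_inv_cancel_left] at this
        · have := m1 _ (mul_mem (inv_mem hq) hz)
          rwa [mul_inv_cancel_left] at this
    obtain ⟨γ, rfl⟩ := H_range (N := m + 1) hβ
    refine ⟨γ, Mk.trans (Mk.symm fin) ?_⟩
    rw [mul_one]
    exact Mk.symm (Mk.stabV γ)
  · have A := S.adj j (by omega)
    have ha' := re A.ha
    have hb' := re A.hb
    obtain ⟨w2, hw2, e1⟩ := A.L2' hw
    have e3 := A.L4 hw2 hw1
    have e4 := S.Hr (mul_mem hk2 hk1) (Nat.lt_succ_self j)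
    have e5 := S.Hr hk2 (Nat.lt_succ_self j)
    have e6 := S.HX hk2 (Nat.lt_succ_self j) hw
    obtain ⟨γ, hγ⟩ := H_range (N := j + 1 + 1)
      (g := (w1 * rv (j + 1 + 2) j) * ((k2 * k1) * w2))
      (mul_mem (mul_mem (XH (by omega) hw1) (rH (by omega)))
        (mul_mem (H_mono (by omega) (mul_mem hk2 hk1)) (XH (by omega) hw2)))
    refine ⟨γ, ?_⟩
    set a := rv (j + 1 + 2) j
    set b := rv (j + 1 + 2) (j + 1) with hbdef
    have t1 : k1 * (w1 * a) * k2 * w * b = (k1 * (w1 * a) * w * b) * k2 := by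
      calc k1 * (w1 * a) * k2 * w * b = k1 * (w1 * a) * (k2 * w) * b := by simp only [mul_assoc]
        _ = k1 * (w1 * a) * w * (k2 * b) := by rw [e6]; simp only [mul_assoc]
        _ = _ := by rw [e5]; simp only [mul_assoc]
    have t2 : k2 * (k1 * (w1 * a) * w * b) = b * (((k2 * k1) * w2) * b * (w1 * a) * b) := by
      calc k2 * (k1 * (w1 * a) * w * b) = k2 * k1 * (w1 * (a * w * a)) * a * b := by
            simp only [mul_assoc, ha', one_mul]
        _ = ((k2 * k1) * b) * w2 * b * w1 * a * b := by rw [e1, ← e3]; simp only [mul_assoc]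
        _ = _ := by rw [e4]; simp only [mul_assoc]
    rw [t1]
    refine Mk.trans (Mk.cyc _ _) ?_
    rw [t2]
    refine Mk.trans (Mk.cyc _ _) ?_
    rw [mul_assoc _ b b, A.hb, mul_one]
    refine Mk.trans (Mk.cyc _ _) ?_
    rw [← mul_assoc, ← hγ]
    exact Mk.symm (Mk.stabV γ)

/-! permutations -/

theorem iota_sv {N : ℕ} {φ : UVB N →* Equiv.Perm (Fin N)} (hφ : IsIota N φ) {i : ℕ}
    (h : i + 1 < N) : φ (sv N i) = Equiv.swap ⟨i, by omega⟩ ⟨i + 1, h⟩ :=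
  (hφ (i + 1) (by omega) (by omega)).1
theorem iota_rv {N : ℕ} {φ : UVB N →* Equiv.Perm (Fin N)} (hφ : IsIota N φ) {i : ℕ}
    (h : i + 1 < N) : φ (rv N i) = Equiv.swap ⟨i, by omega⟩ ⟨i + 1, h⟩ :=
  (hφ (i + 1) (by omega) (by omega)).2

theorem iota_X {N : ℕ} {φ : UVB N →* Equiv.Perm (Fin N)} (hφ : IsIota N φ) {i : ℕ}
    (h : i + 1 < N) {x : UVB N} (hx : x ∈ X (rv N i) (sv N i)) : φ x = 1 := by
  have : X (rv N i) (sv N i) ≤ φ.ker := by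
    refine (Subgroup.closure_le _).2 ?_
    rintro _ (rfl | rfl)
    · change φ _ = 1
      rw [map_mul, iota_sv hφ h, iota_rv hφ h, Equiv.swap_mul_self]
    · change φ _ = 1
      rw [map_mul, iota_sv hφ h, iota_rv hφ h, Equiv.swap_mul_self]
  exact this hx

theorem iota_H {N : ℕ} {φ : UVB N →* Equiv.Perm (Fin N)} (hφ : IsIota N φ) {k j : ℕ}
    (hkj : k < j) (hj : j < N) {g : UVB N} (hg : g ∈ H (sv N) (rv N) k) :
    φ g ⟨j, hj⟩ = ⟨j, hj⟩ := by
  have : H (sv N) (rv N) k ≤ (MulAction.stabilizer (Equiv.Perm (Fin N)) (⟨j, hj⟩ : Fin N)).comap φ := by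
    refine (Subgroup.closure_le _).2 ?_
    rintro _ ⟨i, hi, rfl | rfl⟩
    · change φ _ _ = _
      rw [iota_sv hφ (by omega)]
      apply Equiv.swap_apply_of_ne_of_ne <;> simp only [ne_eq, Fin.mk.injEq] <;> omega
    · change φ _ _ = _
      rw [iota_rv hφ (by omega)]
      apply Equiv.swap_apply_of_ne_of_ne <;> simp only [ne_eq, Fin.mk.injEq] <;> omega
  exact this hg

theorem iota_C {N : ℕ} {φ : UVB N →* Equiv.Perm (Fin N)} (hφ : IsIota N φ) :
    ∀ {k : ℕ} (hk : k < N) {g : UVB N}, g ∈ C (sv N) (rv N) k → φ g ⟨k, hk⟩ = ⟨k, hk⟩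
  | 0, hk, g, hg => by
      have : g = 1 := hg
      rw [this, map_one, Equiv.Perm.one_apply]
  | k + 1, hk, g, hg => by
      obtain ⟨x, hx, c, hc, h, hh, rfl⟩ := hg
      have ih := iota_C hφ (k := k) (by omega) hc
      rw [map_mul, map_mul, map_mul, map_mul, iota_X hφ hk hx, iota_rv hφ hk, one_mul]
      simp only [Equiv.Perm.mul_apply]
      rw [iota_H hφ (by omega) hk hh, Equiv.swap_apply_right, ih, Equiv.swap_apply_left]

theorem iota_trans {m : ℕ} {φ : UVB (m + 2) →* Equiv.Perm (Fin (m + 2))} (hφ : IsIota (m + 2) φ)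
    (d : ℕ) : ∀ (j : ℕ) (hj : j < m + 2), j + d = m + 1 →
      ∃ g : UVB (m + 2), φ g ⟨j, hj⟩ = ⟨m + 1, by omega⟩ := by
  induction d with
  | zero =>
    intro j hj h
    refine ⟨1, ?_⟩
    rw [map_one, Equiv.Perm.one_apply]
    simp only [Fin.mk.injEq]; omega
  | succ d ih =>
    intro j hj h
    obtain ⟨g, hg⟩ := ih (j + 1) (by omega) (by omega)
    refine ⟨g * rv (m + 2) j, ?_⟩
    rw [map_mul, Equiv.Perm.mul_apply, iota_rv hφ (by omega), Equiv.swap_apply_left, hg]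

theorem main {m : ℕ} {φ : UVB (m + 2) →* Equiv.Perm (Fin (m + 2))} (hφ : IsIota (m + 2) φ)
    (α : UVB (m + 2)) (hα : φ α ≠ 1) : ∃ γ : UVB (m + 1), Markov ⟨m + 2, α⟩ ⟨m + 1, γ⟩ := by
  have S := sys (m + 2)
  have : ∃ g, g * α * g⁻¹ ∈ Bs (sv (m + 2)) (rv (m + 2)) (m + 1) := by
    by_contra hcon
    push Not at hcon
    apply hα
    ext1 ⟨j, hj⟩
    obtain ⟨g, hg⟩ := iota_trans hφ (m + 1 - j) j hj (by omega)
    have hC := (S.D (le_refl _) _ (H_top _ (g * α * g⁻¹))).resolve_right (hcon g)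
    have h := iota_C hφ (k := m + 1) (by omega) hC
    rw [← hg, map_mul, map_mul, map_inv] at h
    simpa using h
  obtain ⟨g, j, hj, h, hh, w, hw, h', hh', e⟩ := this
  obtain rfl : m = j := by omega
  obtain ⟨γ, hγ⟩ := red (mul_mem hh' hh) hw
  refine ⟨γ, Mk.trans (Relation.EqvGen.rel _ _ (MarkovBase.conj _ α g)) ?_⟩
  rw [e]
  refine Mk.trans (Mk.cyc _ _) ?_
  simpa only [mul_assoc] using hγ

end UVBProof

/-! ## Statement 6 -/

/-- Lemma 3 of the paper.  There is a map ϱ on the disjoint union of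
the groups `UVB n` such that: (1) every braid α is fused Markov equivalent to ϱ(α);
(2) ϱ(α) = α for pure α; (3) if α ∈ UVB n \ UVP n then ϱ(α) ∈ UVB (n−1). -/
theorem statement6 (ι : ∀ n, UVB n →* Equiv.Perm (Fin n)) (hι : ∀ n, IsIota n (ι n)) :
    ∃ f : (Σ n, UVB n) → (Σ n, UVB n),
      (∀ a : Σ n, UVB n, 2 ≤ a.1 → Markov a (f a)) ∧
      (∀ n, 2 ≤ n → ∀ α : UVB n, α ∈ (ι n).ker → f ⟨n, α⟩ = ⟨n, α⟩) ∧
      (∀ n, 2 ≤ n → ∀ α : UVB n, α ∉ (ι n).ker → (f ⟨n, α⟩).1 = n - 1) := by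
  classical
  have key : ∀ a : Σ n, UVB n, ∃ b : Σ n, UVB n, (2 ≤ a.1 → Markov a b) ∧
      (a.2 ∈ (ι a.1).ker → b = a) ∧ (2 ≤ a.1 → a.2 ∉ (ι a.1).ker → b.1 = a.1 - 1) := by
    rintro ⟨n, α⟩
    by_cases h : α ∈ (ι n).ker
    · exact ⟨⟨n, α⟩, fun _ => Relation.EqvGen.refl _, fun _ => rfl, fun _ h' => absurd h h'⟩
    · by_cases hn : 2 ≤ n
      · obtain ⟨m, rfl⟩ : ∃ m, n = m + 2 := ⟨n - 2, by omega⟩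
        obtain ⟨γ, hγ⟩ := UVBProof.main (hι (m + 2)) α h
        exact ⟨⟨m + 1, γ⟩, fun _ => hγ, fun h' => absurd h' h, fun _ _ => rfl⟩
      · exact ⟨⟨n, α⟩, fun _ => Relation.EqvGen.refl _, fun _ => rfl, fun h' => absurd h' hn⟩
  choose f hf using key
  exact ⟨f, fun a ha => (hf a).1 ha, fun n _ α h => (hf ⟨n, α⟩).2.1 h,
    fun n hn α h => (hf ⟨n, α⟩).2.2 hn h⟩
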